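/- Let α = √7 − 2. Then the set { ∑_{i=0}^∞ a_i α^{2i} − ∑_{i=0}^∞ b_i α^{2i+1} : a : ℕ → {0,1,2}, b : ℕ → {2,3,4} } is exactly the closed interval [ −4α/(1−α²), (2 − 2α)/(1−α²) ]; in particular this set contains 0. -/

import Mathlib

/-!
Writing `c (2 i) = a i` and `c (2 i + 1) = 4 - b i`, the number `∑ a_i α^(2i) - ∑ b_i α^(2i+1)`
equals `∑ c_n α^n - 4α/(1-α²)` with digits `c_n ∈ {0,1,2}`. So the claim is that the expansions
`∑ c_n α^n` fill `[0, L]`, where `L = 2/(1-α)`. Since `α ≥ 1/3` gives `α L ≥ 1`, the interval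
`[0, L]` is covered by its images under `y ↦ c + α y`, `c = 0, 1, 2`, and the greedy digit
algorithm produces an expansion of any given point (`exists_digits`). The other inclusion is a
comparison with geometric series (`digit_series_bounds`).
-/

noncomputable section

/-- The greedy digit of `y` in `{0,1,2}`. -/
def greedyDigit (y : ℝ) : ℕ := if y < 1 then 0 else if y < 2 then 1 else 2

/-- The greedy remainders of `y` in base `α`: each remainder `r` is followed by
`(r - greedyDigit r) / α`. -/
def greedyRem (α y : ℝ) : ℕ → ℝ
  | 0 => y
  | n + 1 => (greedyRem α y n - greedyDigit (greedyRem α y n)) / α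

lemma greedyDigit_le (y : ℝ) : greedyDigit y ≤ 2 := by
  unfold greedyDigit
  split_ifs <;> norm_num

/-- The interval `[0, 2/(1-α)]` is stable under the greedy step; this is where `1/3 ≤ α` enters. -/
lemma greedy_step_mem {α y : ℝ} (h3 : 1 / 3 ≤ α) (h1 : α < 1)
    (hy : y ∈ Set.Icc 0 (2 / (1 - α))) :
    (y - greedyDigit y) / α ∈ Set.Icc 0 (2 / (1 - α)) := by
  have hα : 0 < α := by linarith
  have h1' : 0 < 1 - α := by linarith
  have hL : 2 / (1 - α) = 2 + 2 / (1 - α) * α := by field_simp; ring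
  have hL1 : 1 ≤ 2 / (1 - α) * α := by
    rw [div_mul_eq_mul_div, le_div_iff₀ h1']; linarith
  obtain ⟨hy0, hyL⟩ := hy
  rw [Set.mem_Icc, le_div_iff₀ hα, div_le_iff₀ hα]
  unfold greedyDigit
  split_ifs <;> push_cast <;> constructor <;> linarith

lemma greedyRem_mem {α y : ℝ} (h3 : 1 / 3 ≤ α) (h1 : α < 1)
    (hy : y ∈ Set.Icc 0 (2 / (1 - α))) (n : ℕ) :
    greedyRem α y n ∈ Set.Icc 0 (2 / (1 - α)) := by
  induction n with
  | zero => exact hy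
  | succ n ih => exact greedy_step_mem h3 h1 ih

lemma greedy_partial_sum {α : ℝ} (hα : α ≠ 0) (y : ℝ) (n : ℕ) :
    ∑ i ∈ Finset.range n, (greedyDigit (greedyRem α y i) : ℝ) * α ^ i
      = y - greedyRem α y n * α ^ n := by
  induction n with
  | zero => simp [greedyRem]
  | succ n ih =>
    rw [Finset.sum_range_succ, ih, greedyRem]
    field_simp
    ring

/-- For `1/3 ≤ α < 1`, every point of `[0, 2/(1-α)]` has an expansion in base `α` with digits
`0, 1, 2`. -/
lemma exists_digits {α y : ℝ} (h3 : 1 / 3 ≤ α) (h1 : α < 1)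
    (hy : y ∈ Set.Icc 0 (2 / (1 - α))) :
    ∃ c : ℕ → ℕ, (∀ n, c n ≤ 2) ∧ HasSum (fun n => (c n : ℝ) * α ^ n) y := by
  have hα : 0 < α := by linarith
  refine ⟨fun n => greedyDigit (greedyRem α y n), fun n => greedyDigit_le _, ?_⟩
  rw [hasSum_iff_tendsto_nat_of_nonneg (fun i => by positivity)]
  simp_rw [greedy_partial_sum hα.ne']
  have hpow : Filter.Tendsto (fun n : ℕ => 2 / (1 - α) * α ^ n) Filter.atTop (nhds 0) := by
    simpa using (tendsto_pow_atTop_nhds_zero_of_lt_one hα.le h1).const_mul (2 / (1 - α))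
  have hrem : Filter.Tendsto (fun n : ℕ => greedyRem α y n * α ^ n) Filter.atTop (nhds 0) :=
    squeeze_zero
      (fun n => mul_nonneg (greedyRem_mem h3 h1 hy n).1 (by positivity))
      (fun n => mul_le_mul_of_nonneg_right (greedyRem_mem h3 h1 hy n).2 (by positivity)) hpow
  simpa using hrem.const_sub y

lemma hasSum_even_pow {α : ℝ} (h0 : 0 < α) (h1 : α < 1) (k : ℝ) :
    HasSum (fun i : ℕ => k * α ^ (2 * i)) (k / (1 - α ^ 2)) := by
  have h := (hasSum_geometric_of_lt_one (by positivity : 0 ≤ α ^ 2) (by nlinarith)).mul_left k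
  simpa only [pow_mul, div_eq_mul_inv] using h

lemma hasSum_odd_pow {α : ℝ} (h0 : 0 < α) (h1 : α < 1) (k : ℝ) :
    HasSum (fun i : ℕ => k * α ^ (2 * i + 1)) (k * α / (1 - α ^ 2)) := by
  convert hasSum_even_pow h0 h1 (k * α) using 2 with i
  ring

lemma digit_series_bounds {α : ℝ} (h0 : 0 < α) (h1 : α < 1) {a b : ℕ → ℕ}
    (ha : ∀ i, a i ≤ 2) (hb : ∀ i, 2 ≤ b i ∧ b i ≤ 4) :
    (∑' i : ℕ, (a i : ℝ) * α ^ (2 * i)) - ∑' i : ℕ, (b i : ℝ) * α ^ (2 * i + 1) ∈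
      Set.Icc (-(4 * α) / (1 - α ^ 2)) ((2 - 2 * α) / (1 - α ^ 2)) := by
  have hale : ∀ i, (a i : ℝ) * α ^ (2 * i) ≤ 2 * α ^ (2 * i) := fun i =>
    mul_le_mul_of_nonneg_right (by exact_mod_cast ha i) (by positivity)
  have hble : ∀ i, (b i : ℝ) * α ^ (2 * i + 1) ≤ 4 * α ^ (2 * i + 1) := fun i =>
    mul_le_mul_of_nonneg_right (by exact_mod_cast (hb i).2) (by positivity)
  have hbge : ∀ i, 2 * α ^ (2 * i + 1) ≤ (b i : ℝ) * α ^ (2 * i + 1) := fun i =>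
    mul_le_mul_of_nonneg_right (by exact_mod_cast (hb i).1) (by positivity)
  have hsa := Summable.of_nonneg_of_le (fun i => by positivity) hale
    (hasSum_even_pow h0 h1 2).summable
  have hsb := Summable.of_nonneg_of_le (fun i => by positivity) hble
    (hasSum_odd_pow h0 h1 4).summable
  have e1 : 0 ≤ ∑' i : ℕ, (a i : ℝ) * α ^ (2 * i) := tsum_nonneg fun i => by positivity
  have e2 := hasSum_le hale hsa.hasSum (hasSum_even_pow h0 h1 2)
  have e3 := hasSum_le hble hsb.hasSum (hasSum_odd_pow h0 h1 4)
  have e4 := hasSum_le hbge (hasSum_odd_pow h0 h1 2) hsb.hasSum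
  rw [Set.mem_Icc, neg_div, sub_div]
  constructor <;> linarith

/-- Every point of the interval is attained: expand `x + 4α/(1-α²)` and split the expansion into
its even and odd parts. -/
lemma exists_digit_series {α x : ℝ} (h3 : 1 / 3 ≤ α) (h1 : α < 1)
    (hx : x ∈ Set.Icc (-(4 * α) / (1 - α ^ 2)) ((2 - 2 * α) / (1 - α ^ 2))) :
    ∃ a b : ℕ → ℕ, (∀ i, a i ≤ 2) ∧ (∀ i, 2 ≤ b i ∧ b i ≤ 4) ∧
      x = (∑' i : ℕ, (a i : ℝ) * α ^ (2 * i)) - ∑' i : ℕ, (b i : ℝ) * α ^ (2 * i + 1) := by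
  have h0 : 0 < α := by linarith
  have hm : 1 - α ≠ 0 := (sub_pos.2 h1).ne'
  have hp : 1 + α ≠ 0 := by positivity
  have hL : 2 / (1 - α) = (2 - 2 * α) / (1 - α ^ 2) + 4 * α / (1 - α ^ 2) := by
    rw [show 1 - α ^ 2 = (1 - α) * (1 + α) by ring]
    field_simp
    ring
  have hy : x + 4 * α / (1 - α ^ 2) ∈ Set.Icc 0 (2 / (1 - α)) := by
    rw [Set.mem_Icc, neg_div] at hx
    rw [Set.mem_Icc, hL]
    constructor <;> linarith [hx.1, hx.2]
  obtain ⟨c, hc, hsum⟩ := exists_digits h3 h1 hy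
  have hinje : Function.Injective fun i : ℕ => 2 * i := fun i j h => by
    dsimp only at h
    omega
  have hinjo : Function.Injective fun i : ℕ => 2 * i + 1 := fun i j h => by
    dsimp only at h
    omega
  have hse : Summable fun i : ℕ => (c (2 * i) : ℝ) * α ^ (2 * i) :=
    hsum.summable.comp_injective hinje
  have hso : Summable fun i : ℕ => (c (2 * i + 1) : ℝ) * α ^ (2 * i + 1) :=
    hsum.summable.comp_injective hinjo
  have hsplit := tsum_even_add_odd (f := fun n : ℕ => (c n : ℝ) * α ^ n) hse hso
  rw [hsum.tsum_eq] at hsplit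
  refine ⟨fun i => c (2 * i), fun i => 4 - c (2 * i + 1), fun i => hc _,
    fun i => by have := hc (2 * i + 1); dsimp only; omega, ?_⟩
  have hodd : ∑' i : ℕ, ((4 - c (2 * i + 1) : ℕ) : ℝ) * α ^ (2 * i + 1)
      = 4 * α / (1 - α ^ 2) - ∑' i : ℕ, (c (2 * i + 1) : ℝ) * α ^ (2 * i + 1) := by
    rw [← ((hasSum_odd_pow h0 h1 4).sub hso.hasSum).tsum_eq]
    refine tsum_congr fun i => ?_
    rw [Nat.cast_sub (by have := hc (2 * i + 1); omega)]
    push_cast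
    ring
  simp only [hodd]
  linarith

/-- For `α = √7 - 2`, the set of numbers `∑ a_i α^(2i) - ∑ b_i α^(2i+1)` with digits
`a_i ∈ {0,1,2}` and `b_i ∈ {2,3,4}` is exactly the closed interval
`[-4α/(1-α²), (2-2α)/(1-α²)]`; in particular it contains `0`. -/
theorem digit_sum_set_eq_Icc :
    ({x : ℝ | ∃ a b : ℕ → ℕ, (∀ i, a i ≤ 2) ∧ (∀ i, 2 ≤ b i ∧ b i ≤ 4) ∧
        x = (∑' i : ℕ, (a i : ℝ) * (Real.sqrt 7 - 2) ^ (2 * i)) -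
            ∑' i : ℕ, (b i : ℝ) * (Real.sqrt 7 - 2) ^ (2 * i + 1)} =
      Set.Icc (-(4 * (Real.sqrt 7 - 2)) / (1 - (Real.sqrt 7 - 2) ^ 2))
        ((2 - 2 * (Real.sqrt 7 - 2)) / (1 - (Real.sqrt 7 - 2) ^ 2))) ∧
    (0 : ℝ) ∈ {x : ℝ | ∃ a b : ℕ → ℕ, (∀ i, a i ≤ 2) ∧ (∀ i, 2 ≤ b i ∧ b i ≤ 4) ∧
        x = (∑' i : ℕ, (a i : ℝ) * (Real.sqrt 7 - 2) ^ (2 * i)) -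
            ∑' i : ℕ, (b i : ℝ) * (Real.sqrt 7 - 2) ^ (2 * i + 1)} := by
  have hlo : (7 / 3 : ℝ) < Real.sqrt 7 := Real.lt_sqrt_of_sq_lt (by norm_num)
  have hhi : Real.sqrt 7 < 3 := by
    rw [Real.sqrt_lt' (by norm_num)]
    norm_num
  generalize hα : Real.sqrt 7 - 2 = α
  have h3 : 1 / 3 ≤ α := by linarith
  have h1 : α < 1 := by linarith
  have hden : 0 < 1 - α ^ 2 := by nlinarith
  refine ⟨Set.Subset.antisymm ?_ fun x hx => exists_digit_series h3 h1 hx,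
    exists_digit_series h3 h1 ⟨?_, ?_⟩⟩
  · rintro x ⟨a, b, ha, hb, rfl⟩
    exact digit_series_bounds (by linarith) h1 ha hb
  · exact div_nonpos_of_nonpos_of_nonneg (by linarith) hden.le
  · exact div_nonneg (by linarith) hden.le
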